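/- Let (X,d) be a metric space, 0 < α < 1, and ε := arccos(α)/2. Let x ∈ X and R > 0, and suppose there is L ∈ ℕ such that every p ∈ B_R(x) satisfies the ATB(ε) condition with constants L and 2R. Then there exists N ∈ ℕ, depending only on L, such that no N-point subset of B_R(x) satisfies the SRA(α) condition. -/

import Mathlib

/-- A subset of a metric space satisfies the small rough angle condition `SRA(α)`. -/
def IsSRA {X : Type*} [MetricSpace X] (α : ℝ) (s : Set X) : Prop :=
  ∀ x ∈ s, ∀ y ∈ s, ∀ z ∈ s,
    dist x y ≤ max (dist x z + α * dist z y) (α * dist x z + dist z y)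

/-- The Euclidean comparison angle `∠̃ x p y`. -/
noncomputable def compAngle {X : Type*} [MetricSpace X] (p x y : X) : ℝ :=
  Real.arccos ((dist x p ^ 2 + dist y p ^ 2 - dist x y ^ 2) / (2 * dist x p * dist y p))

/-- The point `p` satisfies the `ATB(ε)` condition with constants `L` and `R`:
for every `L` points in `B_R(p) \ {p}` two of them make comparison angle `< ε` at `p`. -/
def ATBPoint {X : Type*} [MetricSpace X] (ε : ℝ) (p : X) (L : ℕ) (R : ℝ) : Prop :=
  ∀ y : Fin L → X, (∀ i, y i ∈ Metric.ball p R ∧ y i ≠ p) →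
    ∃ i j, i ≠ j ∧ compAngle p (y i) (y j) < ε

/-!
In an `SRA(α)` set every comparison angle is at most `π - arccos α`. As the comparison angles of a
triangle add up to `π`, at most one of them is smaller than `arccos α / 2`; call such an angle
small. By ATB, for every `p` in the set, the graph joining `x` to `y` when the angle `∠̃ x p y` is
small has no independent set of `L` points, so by Ramsey's theorem it has large cliques once the
set is large. Pick a point `p₁`, pass to a large clique of its graph, pick `p₂` in this clique,
and so on. For `i < j < k` the angle at `pᵢ` in the triangle `pᵢ pⱼ pₖ` is small, so the one at `pₖ`
is not. Thus all the points that precede `p_{L+1}` are independent in the graph of `p_{L+1}`,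
contradicting ATB at that point.
-/

section Ramsey

open SimpleGraph

variable {V : Type*} {G : SimpleGraph V}

theorem cliqueFreeOn_compl {s : Set V} {n : ℕ} : Gᶜ.CliqueFreeOn s n ↔ G.IndepSetFreeOn s n := by
  simp only [CliqueFreeOn, IndepSetFreeOn, isNClique_compl]

theorem indepSetFreeOn_of_succ {s : Set V} {n : ℕ} {p : V} (h : G.IndepSetFreeOn s (n + 1))
    (hp : p ∈ s) : G.IndepSetFreeOn (s ∩ Gᶜ.neighborSet p) n :=
  cliqueFreeOn_compl.1 ((cliqueFreeOn_compl.2 h).of_succ _ hp)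

theorem card_lt_choose_of_cliqueFreeOn_of_indepSetFreeOn {a b : ℕ} {s : Finset V}
    (ha : G.CliqueFreeOn s a) (hb : G.IndepSetFreeOn s b) : s.card < (a + b).choose a := by
  classical
  induction a generalizing b s with
  | zero => exact absurd (by simp) (ha (t := ∅) (by simp))
  | succ a iha =>
    induction b generalizing s with
    | zero => exact absurd (by simp [isNIndepSet_iff]) (hb (t := ∅) (by simp))
    | succ b ihb =>
      obtain rfl | ⟨p, hp⟩ := s.eq_empty_or_nonempty
      · exact Nat.choose_pos (by omega)
      let neighbors := (s.erase p).filter (G.Adj p)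
      let strangers := (s.erase p).filter (¬ G.Adj p ·)
      have neighbors_subset : (neighbors : Set V) ⊆ s ∩ G.neighborSet p := by
        intro x
        simp +contextual [neighbors]
      have strangers_subset : (strangers : Set V) ⊆ s ∩ Gᶜ.neighborSet p := by
        intro x
        simp +contextual [strangers, eq_comm]
      have neighbors_card : neighbors.card < (a + (b + 1)).choose a :=
        iha ((ha.of_succ _ hp).subset _ neighbors_subset) fun t ht =>
          hb (ht.trans (neighbors_subset.trans Set.inter_subset_left))
      have strangers_card : strangers.card < (a + 1 + b).choose (a + 1) :=
        ihb (ha.subset _ (strangers_subset.trans Set.inter_subset_left)) fun t ht =>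
          indepSetFreeOn_of_succ hb hp (ht.trans strangers_subset)
      have card_add : neighbors.card + strangers.card + 1 = s.card := by
        rw [Finset.card_filter_add_card_filter_not, Finset.card_erase_add_one hp]
      have pascal : (a + 1 + (b + 1)).choose (a + 1) =
          (a + (b + 1)).choose a + (a + 1 + b).choose (a + 1) := by
        rw [show a + 1 + (b + 1) = a + b + 1 + 1 by ring, Nat.choose_succ_succ]
        congr 2; ring
      omega

/-- The iterated Ramsey bound of `card_lt_ramseyIterate`. One step of the recursion takes a point
`p` away and applies Ramsey's theorem for cliques of `ramseyIterate L m` points and independent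
sets of `L` points to the rest, in the graph attached to `p`. -/
def ramseyIterate (L : ℕ) : ℕ → ℕ
  | 0 => 1
  | m + 1 => (ramseyIterate L m + L).choose L + 1

theorem card_lt_ramseyIterate {L m : ℕ} {G : V → SimpleGraph V} {s : Finset V}
    (hG : ∀ p ∈ s, ∀ x ∈ s, ∀ y ∈ s, x ≠ p → y ≠ p → (G p).Adj x y → ¬ (G y).Adj p x)
    (hL : ∀ p ∈ s, (G p).IndepSetFreeOn (s \ {p}) L)
    (hm : ∀ p ∈ s, (G p).IndepSetFreeOn (s \ {p}) m) : s.card < ramseyIterate L m := by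
  classical
  induction m generalizing s with
  | zero =>
    suffices s = ∅ by simp [this, ramseyIterate]
    exact Finset.eq_empty_of_forall_notMem fun p hp =>
      hm p hp (t := ∅) (by simp) (by simp [isNIndepSet_iff])
  | succ m ih =>
    obtain rfl | ⟨p, hp⟩ := s.eq_empty_or_nonempty
    · simp [ramseyIterate]
    have clique_free : (G p).CliqueFreeOn (s \ {p}) (ramseyIterate L m) := by
      intro t ht hclique
      obtain ⟨hts, hpt⟩ : t ⊆ s ∧ p ∉ t := by simpa [Set.subset_sdiff] using ht
      have nonadjacent : ∀ q ∈ t, ((t : Set V) \ {q}) ⊆ (s \ {q}) ∩ (G q)ᶜ.neighborSet p := by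
        rintro q hq x ⟨hx, hxq⟩
        refine ⟨⟨hts hx, hxq⟩, (compl_adj (G q) p x).2 ⟨ne_of_mem_of_not_mem hx hpt |>.symm, ?_⟩⟩
        exact hG p hp x (hts hx) q (hts hq) (ne_of_mem_of_not_mem hx hpt)
          (ne_of_mem_of_not_mem hq hpt) (hclique.isClique hx hq hxq)
      refine (ih (fun q hq x hx y hy => hG q (hts hq) x (hts hx) y (hts hy))
        (fun q hq c hc => hL q (hts hq) (hc.trans (Set.sdiff_subset_sdiff_left hts)))
        fun q hq c hc => ?_).ne hclique.card_eq
      exact indepSetFreeOn_of_succ (hm q (hts hq))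
        ⟨hp, (ne_of_mem_of_not_mem hq hpt).symm⟩ (hc.trans (nonadjacent q hq))
    have card_erase_lt := card_lt_choose_of_cliqueFreeOn_of_indepSetFreeOn
      (s := s.erase p) (by simpa using clique_free) (by simpa using hL p hp)
    rw [Nat.choose_symm_add] at card_erase_lt
    rw [← Finset.card_erase_add_one hp, ramseyIterate]
    omega

end Ramsey

section ComparisonAngle

variable {X Y : Type*} [MetricSpace X] [MetricSpace Y]

theorem compAngle_comm (p x y : X) : compAngle p x y = compAngle p y x := by
  unfold compAngle
  rw [dist_comm x y, add_comm, mul_right_comm]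

theorem compAngle_congr {p x y : X} {p' x' y' : Y} (hx : dist x p = dist x' p')
    (hy : dist y p = dist y' p') (hxy : dist x y = dist x' y') :
    compAngle p x y = compAngle p' x' y' := by
  simp only [compAngle, hx, hy, hxy]

theorem dist_sq_eq_sub_mul_cos_compAngle (p x y : X) :
    dist x y ^ 2 =
      dist x p ^ 2 + dist y p ^ 2 - 2 * dist x p * dist y p * Real.cos (compAngle p x y) := by
  obtain rfl | hx := eq_or_ne x p
  · simp [dist_comm]
  obtain rfl | hy := eq_or_ne y p
  · simp
  have hxp : 0 < dist x p := dist_pos.2 hx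
  have hyp : 0 < dist y p := dist_pos.2 hy
  have abs_sub_le : |dist x p - dist y p| ≤ dist x y := abs_dist_sub_le x y p
  have le_add : dist x y ≤ dist x p + dist y p := dist_triangle_right x y p
  rw [compAngle, Real.cos_arccos, mul_div_cancel₀ _ (by positivity)]
  · ring
  · rw [le_div_iff₀ (by positivity)]
    linarith [pow_le_pow_left₀ dist_nonneg le_add 2]
  · rw [div_le_iff₀ (by positivity)]
    linarith [sq_le_sq' (neg_le_of_abs_le abs_sub_le) (le_of_abs_le abs_sub_le)]

theorem exists_comparison_triangle (x y z : X) :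
    ∃ x' y' z' : ℂ, dist x y = dist x' y' ∧ dist y z = dist y' z' ∧ dist x z = dist x' z' := by
  refine ⟨dist x z, dist y z * Complex.exp (compAngle z x y * Complex.I), 0, ?_, ?_, ?_⟩
  · rw [← sq_eq_sq₀ dist_nonneg dist_nonneg, dist_sq_eq_sub_mul_cos_compAngle z,
      Complex.dist_eq, Complex.sq_norm, Complex.normSq_apply]
    simp only [Complex.sub_re, Complex.sub_im, Complex.mul_re, Complex.mul_im, Complex.ofReal_re,
      Complex.ofReal_im, Complex.exp_ofReal_mul_I_re, Complex.exp_ofReal_mul_I_im]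
    linear_combination -dist y z ^ 2 * Real.sin_sq_add_cos_sq (compAngle z x y)
  · simp [Complex.norm_exp_ofReal_mul_I]
  · simp

theorem compAngle_eq_angle {V P : Type*} [NormedAddCommGroup V] [InnerProductSpace ℝ V]
    [MetricSpace P] [NormedAddTorsor V P] (p x y : P) :
    compAngle p x y = EuclideanGeometry.angle x p y := by
  rw [compAngle, EuclideanGeometry.angle, InnerProductGeometry.angle,
    real_inner_eq_norm_mul_self_add_norm_mul_self_sub_norm_sub_mul_self_div_two,
    vsub_sub_vsub_cancel_right, ← dist_eq_norm_vsub, ← dist_eq_norm_vsub, ← dist_eq_norm_vsub]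
  ring_nf

theorem compAngle_add_compAngle_add_compAngle_eq_pi {x y : X} (z : X) (h : x ≠ y) :
    compAngle x y z + compAngle y z x + compAngle z x y = Real.pi := by
  obtain ⟨x', y', z', hxy, hyz, hxz⟩ := exists_comparison_triangle x y z
  have h' : x' ≠ y' := dist_ne_zero.1 (hxy ▸ dist_ne_zero.2 h)
  have hyx : dist y x = dist y' x' := by simpa only [dist_comm] using hxy
  have hzy : dist z y = dist z' y' := by simpa only [dist_comm] using hyz
  have hzx : dist z x = dist z' x' := by simpa only [dist_comm] using hxz
  rw [compAngle_congr hyx hzx hyz, compAngle_congr hzy hxy hzx, compAngle_congr hxz hyz hxy]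
  simp only [compAngle_eq_angle (V := ℂ)]
  linarith [EuclideanGeometry.angle_add_angle_add_angle_eq_pi z' h']

end ComparisonAngle

variable {X : Type*} [MetricSpace X]

namespace IsSRA

variable {α : ℝ} {s : Set X} {x y z : X}

theorem dist_sq_le (hs : IsSRA α s) (hα : |α| ≤ 1) (hx : x ∈ s) (hy : y ∈ s) (hz : z ∈ s) :
    dist x y ^ 2 ≤ dist x z ^ 2 + dist z y ^ 2 + 2 * α * dist x z * dist z y := by
  have sq_le_one : α ^ 2 ≤ 1 := (sq_le_one_iff_abs_le_one α).2 hα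
  obtain h | h := le_max_iff.1 (hs x hx y hy z hz)
  · linarith [pow_le_pow_left₀ dist_nonneg h 2,
      mul_le_mul_of_nonneg_right sq_le_one (sq_nonneg (dist z y))]
  · linarith [pow_le_pow_left₀ dist_nonneg h 2,
      mul_le_mul_of_nonneg_right sq_le_one (sq_nonneg (dist x z))]

theorem compAngle_le (hs : IsSRA α s) (hα : |α| ≤ 1) (hx : x ∈ s) (hy : y ∈ s) (hz : z ∈ s)
    (hxz : x ≠ z) (hyz : y ≠ z) : compAngle z x y ≤ Real.pi - Real.arccos α := by
  have hxz' : 0 < dist x z := dist_pos.2 hxz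
  have hyz' : 0 < dist y z := dist_pos.2 hyz
  rw [← Real.arccos_neg, compAngle]
  apply Real.arccos_le_arccos
  rw [le_div_iff₀ (by positivity)]
  have := hs.dist_sq_le hα hx hy hz
  rw [dist_comm z y] at this
  linarith

theorem arccos_div_two_le_compAngle (hs : IsSRA α s) (hα : |α| ≤ 1) (hx : x ∈ s) (hy : y ∈ s)
    (hz : z ∈ s) (hxy : x ≠ y) (hyz : y ≠ z) (h : compAngle x y z < Real.arccos α / 2) :
    Real.arccos α / 2 ≤ compAngle z x y := by
  linarith [compAngle_add_compAngle_add_compAngle_eq_pi z hxy,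
    hs.compAngle_le hα hz hx hy hyz.symm hxy]

end IsSRA

/-- The graph in which two points are adjacent when their comparison angle at `p` is less than `ε`.
The vertex `p` itself has to be disregarded, since `compAngle p p x` has no meaning. -/
def smallAngleGraph (ε : ℝ) (p : X) : SimpleGraph X where
  Adj x y := x ≠ y ∧ compAngle p x y < ε
  symm := ⟨fun x y h => ⟨h.1.symm, compAngle_comm p x y ▸ h.2⟩⟩
  loopless := ⟨fun _ h => h.1 rfl⟩

theorem ATBPoint.indepSetFreeOn_smallAngleGraph {ε : ℝ} {p : X} {L : ℕ} {R : ℝ}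
    (h : ATBPoint ε p L R) :
    (smallAngleGraph ε p).IndepSetFreeOn (Metric.ball p R \ {p}) L := by
  intro t ht hindep
  let e := t.equivFinOfCardEq hindep.card_eq
  obtain ⟨i, j, hij, hlt⟩ := h (fun i => e.symm i) fun i => ht (e.symm i).2
  have hne : (e.symm i : X) ≠ e.symm j := Subtype.coe_injective.ne (e.symm.injective.ne hij)
  exact hindep.isIndepSet (e.symm i).2 (e.symm j).2 hne ⟨hne, hlt⟩

theorem dist_lt_two_mul_of_mem_ball {M : Type*} [PseudoMetricSpace M] {x p q : M} {R : ℝ}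
    (hp : p ∈ Metric.ball x R) (hq : q ∈ Metric.ball x R) : dist p q < 2 * R := by
  rw [two_mul]
  exact Metric.dist_lt_add_of_nonempty_ball_inter_ball
    ⟨x, Metric.mem_ball_comm.1 hp, Metric.mem_ball_comm.1 hq⟩

theorem atb_prevents_large_sra_general {α : ℝ} (hα : |α| ≤ 1) {L : ℕ} {R : ℝ} {s : Finset X}
    (hs : IsSRA α (s : Set X)) (hR : ∀ p ∈ s, ∀ q ∈ s, dist p q < R)
    (hATB : ∀ p ∈ s, ATBPoint (Real.arccos α / 2) p L R) : s.card < ramseyIterate L L := by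
  have indep_free : ∀ p ∈ s,
      (smallAngleGraph (Real.arccos α / 2) p).IndepSetFreeOn (s \ {p}) L := fun p hp t ht =>
    (hATB p hp).indepSetFreeOn_smallAngleGraph <| ht.trans <|
      Set.sdiff_subset_sdiff_left fun q hq => hR q hq p hp
  refine card_lt_ramseyIterate ?_ indep_free indep_free
  rintro p hp x hx y hy hxp - ⟨hxy, small_at_p⟩ ⟨-, small_at_y⟩
  exact small_at_y.not_ge <|
    hs.arccos_div_two_le_compAngle hα hp hx hy hxp.symm hxy small_at_p

/-- If every point of `B_R(x)` satisfies `ATB(arccos α / 2)` with constants `L` and `2R`,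
then there is `N`, depending only on `L`, such that `B_R(x)` contains no `N`-point
`SRA(α)`-subset. -/
theorem atb_prevents_large_sra :
    ∀ L : ℕ, ∃ N : ℕ,
      ∀ (X : Type) [MetricSpace X], ∀ α : ℝ, 0 < α → α < 1 →
        ∀ (x : X) (R : ℝ), 0 < R →
          (∀ p ∈ Metric.ball x R, ATBPoint (Real.arccos α / 2) p L (2 * R)) →
          ¬ ∃ s : Finset X, s.card = N ∧ (↑s : Set X) ⊆ Metric.ball x R ∧
            IsSRA α (↑s : Set X) := by
  refine fun L => ⟨ramseyIterate L L, ?_⟩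
  rintro X _ α hα₀ hα₁ x R - hATB ⟨s, hcard, hsub, hs⟩
  exact (atb_prevents_large_sra_general (abs_le.2 ⟨by linarith, hα₁.le⟩) hs
    (fun p hp q hq => dist_lt_two_mul_of_mem_ball (hsub hp) (hsub hq))
    fun p hp => hATB p (hsub hp)).ne hcard
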